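/- Let Γ be a finite simple graph and let G = G(Γ) be the associated right-angled Artin group. Let N be a finitely generated full normal subgroup of G. Then the center of G/N has finite index in G/N. -/

import Mathlib

/-- The defining relators of a right-angled Artin group: commutators of generators
corresponding to adjacent vertices. -/
def raagRels {V : Type} (Γ : SimpleGraph V) : Set (FreeGroup V) :=
  { r | ∃ v w : V, Γ.Adj v w ∧
      r = FreeGroup.of v * FreeGroup.of w * (FreeGroup.of v)⁻¹ * (FreeGroup.of w)⁻¹ }

/-- The right-angled Artin group associated to the simple graph `Γ`. -/
abbrev RAAG {V : Type} (Γ : SimpleGraph V) : Type := PresentedGroup (raagRels Γ)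

/-- The subgroup `G(Δ)` of the RAAG generated by the vertices in the set `S`. -/
def raagVertexSubgroup {V : Type} (Γ : SimpleGraph V) (S : Set V) : Subgroup (RAAG Γ) :=
  Subgroup.closure { x | ∃ v ∈ S, x = PresentedGroup.of (rels := raagRels Γ) v }

/-- A set of vertices `S` is a join of two (nonempty) subgraphs if it can be split into
two nonempty pieces every two vertices of which (one from each piece) are adjacent. -/
def IsJoinOfTwo {V : Type} (Γ : SimpleGraph V) (S : Set V) : Prop :=
  ∃ A B : Set V, A.Nonempty ∧ B.Nonempty ∧ Disjoint A B ∧ A ∪ B = S ∧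
    ∀ a ∈ A, ∀ b ∈ B, Γ.Adj a b

/-- `P : Fin k → Set V` is a join decomposition of `Γ` into join-indecomposable pieces. -/
def IsJoinDecomposition {V : Type} (Γ : SimpleGraph V) {k : ℕ} (P : Fin k → Set V) : Prop :=
  (∀ i, (P i).Nonempty) ∧ (∀ v : V, ∃! i, v ∈ P i) ∧
    (∀ i j, i ≠ j → ∀ a ∈ P i, ∀ b ∈ P j, Γ.Adj a b) ∧
    (∀ i, ¬ IsJoinOfTwo Γ (P i))

/-- A subgroup `N` of the RAAG is full if for a join decomposition of `Γ` into
join-indecomposable pieces `Γ_1, …, Γ_k`, `N` intersects each `G(Γ_i)` nontrivially. -/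
def IsFullSubgroup {V : Type} (Γ : SimpleGraph V) (N : Subgroup (RAAG Γ)) : Prop :=
  ∀ (k : ℕ) (P : Fin k → Set V), IsJoinDecomposition Γ P →
    ∀ i, N ⊓ raagVertexSubgroup Γ (P i) ≠ ⊥

/-- A group is abelian-by-finite if it has an abelian normal subgroup of finite index. -/
def AbelianByFinite (Q : Type) [Group Q] : Prop :=
  ∃ A : Subgroup Q, A.Normal ∧ A.FiniteIndex ∧ ∀ x y : A, x * y = y * x

/-- A group is finite-by-abelian if it has a finite normal subgroup with abelian quotient,
equivalently a finite normal subgroup containing all commutators. -/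
def FiniteByAbelian (Q : Type) [Group Q] : Prop :=
  ∃ F : Subgroup Q, F.Normal ∧ Finite F ∧ ∀ x y : Q, x * y * x⁻¹ * y⁻¹ ∈ F

/-- Abstract form of an HNN decomposition `G = A *_L` with stable letter `t` centralizing `L`:
`H` is the half-tree on the far side of the base edge. -/
structure HalfTree {G : Type} [Group G] (A L : Subgroup G) (t : G) (H : Set G) : Prop where
  gen : Subgroup.closure ((A : Set G) ∪ {t}) = ⊤
  le : L ≤ A
  comm : ∀ l ∈ L, t * l = l * t
  one_notMem : (1 : G) ∉ H
  mulA : ∀ g, ∀ a ∈ A, (g * a ∈ H ↔ g ∈ H)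
  mult : ∀ g, (g * t ∈ H ↔ g ∈ H ∨ g ∈ L)

namespace HalfTree

variable {G : Type} [Group G] {A L : Subgroup G} {t : G} {H : Set G}

theorem ind (h : HalfTree A L t H) {P : G → Prop} (h1 : P 1)
    (hA : ∀ x, ∀ a ∈ A, P x → P (x * a)) (ht : ∀ x, P x → P (x * t))
    (ht' : ∀ x, P x → P (x * t⁻¹)) (x : G) : P x := by
  have hx : x ∈ Subgroup.closure ((A : Set G) ∪ {t}) := by rw [h.gen]; trivial
  induction hx using Subgroup.closure_induction_right with
  | one => exact h1
  | mul_right x y hy ih =>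
    rename_i hx
    rcases ih with h | h
    · exact hA _ _ h (by assumption)
    · rw [Set.mem_singleton_iff] at h; subst h; exact ht _ (by assumption)
  | mul_inv_cancel x y hy ih =>
    rename_i hx
    rcases ih with h | h
    · exact hA _ _ (A.inv_mem h) (by assumption)
    · rw [Set.mem_singleton_iff] at h; subst h; exact ht' _ (by assumption)

theorem notMemA (h : HalfTree A L t H) {a : G} (ha : a ∈ A) : a ∉ H := by
  have := h.mulA 1 a ha
  rw [one_mul] at this
  rw [this]; exact h.one_notMem

theorem notMemL (h : HalfTree A L t H) {a : G} (ha : a ∈ L) : a ∉ H := h.notMemA (h.le ha)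

theorem multinv (h : HalfTree A L t H) (g : G) : g * t⁻¹ ∈ H ↔ g ∈ H ∧ g * t⁻¹ ∉ L := by
  have h1 := h.mult (g * t⁻¹)
  rw [inv_mul_cancel_right] at h1
  have h2 : g * t⁻¹ ∈ L → g * t⁻¹ ∉ H := fun h3 => h.notMemL h3
  tauto

theorem t_mem (h : HalfTree A L t H) : t ∈ H := by
  have := h.mult 1
  rw [one_mul] at this
  exact this.2 (Or.inr L.one_mem)

theorem conj_mem_iff (h : HalfTree A L t H) (x : G) : t * x * t⁻¹ ∈ L ↔ x ∈ L := by
  constructor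
  · intro hx
    have := h.comm _ hx
    have h2 : x = t * x * t⁻¹ := by
      have h3 : t * (t * x * t⁻¹) = t * x := by rw [this]; group
      exact (mul_left_cancel h3).symm
    rw [h2]; exact hx
  · intro hx
    rw [h.comm x hx, mul_inv_cancel_right]; exact hx

/-- The symmetric datum. -/
theorem symm (h : HalfTree A L t H) : HalfTree A L t⁻¹ {x | t * x ∉ H} where
  gen := by
    rw [eq_top_iff, ← h.gen, Subgroup.closure_le]
    rintro x (hx | hx)
    · exact Subgroup.subset_closure (Or.inl hx)
    · rw [Set.mem_singleton_iff] at hx; subst hx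
      have : x⁻¹ ∈ Subgroup.closure ((A : Set G) ∪ {x⁻¹}) := Subgroup.subset_closure (Or.inr rfl)
      simpa using Subgroup.inv_mem _ this
  le := h.le
  comm := by
    intro l hl
    have := h.comm l hl
    rw [inv_mul_eq_iff_eq_mul, ← mul_assoc, this, mul_inv_cancel_right]
  one_notMem := by
    simpa using h.t_mem
  mulA := by
    intro g a ha
    simp only [Set.mem_ofPred_eq, ← mul_assoc]
    rw [h.mulA _ _ ha]
  mult := by
    intro g
    simp only [Set.mem_ofPred_eq, ← mul_assoc]
    rw [h.multinv, h.conj_mem_iff]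
    tauto

theorem disj (h : HalfTree A L t H) {a : G} (ha : a ∈ A) (haL : a ∉ L) (x : G) :
    x ∈ H → a * x ∉ H := by
  induction x using h.ind with
  | h1 => intro h1; exact absurd h1 h.one_notMem
  | hA x b hb ih => rw [← mul_assoc, h.mulA _ _ hb, h.mulA _ _ hb]; exact ih
  | ht x ih =>
    rw [← mul_assoc, h.mult, h.mult]
    rintro (hx | hx) (hy | hy)
    · exact ih hx hy
    · have : x ∈ A := by
        have := A.mul_mem (A.inv_mem ha) (h.le hy)
        simpa using this
      exact h.notMemA this hx
    · exact h.notMemA (A.mul_mem ha (h.le hx)) hy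
    · apply haL
      have := L.mul_mem hy (L.inv_mem hx)
      simpa using this
  | ht' x ih =>
    rw [← mul_assoc, h.multinv, h.multinv]
    intro h1 h2
    exact ih h1.1 h2.1

theorem nested1 (h : HalfTree A L t H) {n : G} (hn : n ∈ H) (hn' : n⁻¹ ∉ H) (x : G) :
    x ∈ H → n * x ∈ H := by
  induction x using h.ind with
  | h1 => intro h1; exact absurd h1 h.one_notMem
  | hA x b hb ih => rw [← mul_assoc, h.mulA _ _ hb, h.mulA _ _ hb]; exact ih
  | ht x ih =>
    rw [← mul_assoc, h.mult, h.mult]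
    rintro (hx | hx)
    · exact Or.inl (ih hx)
    · left; rw [h.mulA _ _ (h.le hx)]; exact hn
  | ht' x ih =>
    intro hx
    have hx1 := (h.multinv _).1 hx
    rw [← mul_assoc, h.multinv]
    refine ⟨ih hx1.1, fun hl => hn' ?_⟩
    have : x * t⁻¹ = n⁻¹ * (n * x * t⁻¹) := by group
    rw [this, h.mulA _ _ (h.le hl)] at hx
    exact hx

theorem nested2 (h : HalfTree A L t H) {n : G} (hn : n ∈ H) (hn' : n⁻¹ ∈ H) (x : G) :
    x ∉ H → n * x ∈ H := by
  induction x using h.ind with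
  | h1 => intro _; simpa using hn
  | hA x b hb ih => rw [← mul_assoc, h.mulA _ _ hb, h.mulA _ _ hb]; exact ih
  | ht x ih =>
    rw [← mul_assoc, h.mult, h.mult]
    intro hx
    exact Or.inl (ih fun h1 => hx (Or.inl h1))
  | ht' x ih =>
    intro hx
    by_cases hl : x * t⁻¹ ∈ L
    · rw [h.mulA _ _ (h.le hl)]; exact hn
    · have hxH : x ∉ H := fun h1 => hx ((h.multinv _).2 ⟨h1, hl⟩)
      rw [← mul_assoc, h.multinv]
      refine ⟨ih hxH, fun hl => hx ?_⟩
      have : x * t⁻¹ = n⁻¹ * (n * x * t⁻¹) := by group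
      rw [this, h.mulA _ _ (h.le hl)]
      exact hn'

/-- A hyperbolic element in `N` whose axis crosses the base edge. -/
theorem exists_hyp (h : HalfTree A L t H) (N : Subgroup G) [N.Normal] {a : G} (ha : a ∈ A)
    (haL : a ∉ L) {n : G} (hnN : n ∈ N) (hn : n ∈ H) :
    ∃ m ∈ N, m ∈ H ∧ ∀ x ∈ H, m * x ∈ H := by
  by_cases hn' : n⁻¹ ∈ H
  · have ha' : a⁻¹ ∈ A := A.inv_mem ha
    have haL' : a⁻¹ ∉ L := fun hl => haL (by simpa using L.inv_mem hl)
    have key : ∀ x, a⁻¹ * x ∉ H → n * (a * (n⁻¹ * (a⁻¹ * x))) ∈ H := by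
      intro x hx
      apply h.nested2 hn hn'
      apply h.disj ha haL
      exact h.nested2 hn' (by simpa using hn) _ hx
    refine ⟨n * (a * n⁻¹ * a⁻¹), N.mul_mem hnN
      (Subgroup.Normal.conj_mem inferInstance _ (N.inv_mem hnN) a), ?_, ?_⟩
    · have := key 1 (by rw [mul_one]; exact h.notMemA ha')
      simpa [mul_assoc] using this
    · intro x hx
      have := key x (h.disj ha' haL' x hx)
      simpa [mul_assoc] using this
  · exact ⟨n, hnN, hn, h.nested1 hn hn'⟩

theorem finite_cross (h : HalfTree A L t H) (x : G) :
    ∃ F : Finset G, ∀ g, (∀ w ∈ F, g * w ∉ L) → (g * x ∈ H ↔ g ∈ H) := by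
  classical
  induction x using h.ind with
  | h1 => exact ⟨∅, by simp⟩
  | hA x b hb ih =>
    obtain ⟨F, hF⟩ := ih
    refine ⟨F, fun g hg => ?_⟩
    rw [← mul_assoc, h.mulA _ _ hb]; exact hF g hg
  | ht x ih =>
    obtain ⟨F, hF⟩ := ih
    refine ⟨insert x F, fun g hg => ?_⟩
    rw [← mul_assoc, h.mult, ← hF g (fun w hw => hg w (Finset.mem_insert_of_mem hw))]
    have := hg x (Finset.mem_insert_self _ _)
    tauto
  | ht' x ih =>
    obtain ⟨F, hF⟩ := ih
    refine ⟨insert (x * t⁻¹) F, fun g hg => ?_⟩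
    rw [← mul_assoc, h.multinv, ← hF g (fun w hw => hg w (Finset.mem_insert_of_mem hw))]
    have := hg (x * t⁻¹) (Finset.mem_insert_self _ _)
    rw [← mul_assoc] at this
    tauto

theorem pow_mem {m : G} (hm : m ∈ H) (hmH : ∀ x ∈ H, m * x ∈ H) (k : ℕ) : m ^ (k + 1) ∈ H := by
  induction k with
  | zero => simpa using hm
  | succ k ih => rw [pow_succ']; exact hmH _ ih

theorem inv_pow_notMem (h : HalfTree A L t H) {m : G} (hmH : ∀ x ∈ H, m * x ∈ H) (k : ℕ) :
    (m ^ k)⁻¹ ∉ H := by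
  induction k with
  | zero => simpa using h.one_notMem
  | succ k ih =>
    intro hk
    apply ih
    have := hmH _ hk
    rwa [pow_succ, mul_inv_rev, mul_inv_cancel_left] at this

theorem finite_bad (h : HalfTree A L t H) {m : G} (hm : m ∈ H) (hmH : ∀ x ∈ H, m * x ∈ H)
    (F : Finset G) : {k : ℤ | ∃ w ∈ F, m ^ k * w ∈ L}.Finite := by
  have : {k : ℤ | ∃ w ∈ F, m ^ k * w ∈ L} = ⋃ w ∈ F, {k : ℤ | m ^ k * w ∈ L} := by
    ext k; simp
  rw [this]
  refine Set.Finite.biUnion F.finite_toSet fun w _ => Set.Subsingleton.finite ?_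
  have key : ∀ j k : ℤ, j < k → m ^ j * w ∈ L → m ^ k * w ∈ L → False := by
    intro j k hjk hj hk
    have h1 := L.mul_mem hk (L.inv_mem hj)
    have h2 : m ^ k * w * (m ^ j * w)⁻¹ = m ^ (k - j) := by rw [zpow_sub]; group
    obtain ⟨p, hp⟩ : ∃ p : ℕ, k - j = ((p + 1 : ℕ) : ℤ) := ⟨(k - j - 1).toNat, by omega⟩
    rw [h2, hp, zpow_natCast] at h1
    exact h.notMemL h1 (pow_mem hm hmH p)
  intro j hj k hk
  rcases lt_trichotomy j k with h1 | h1 | h1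
  · exact (key j k h1 hj hk).elim
  · exact h1
  · exact (key k j h1 hk hj).elim

theorem finiteIndex_aux (h : HalfTree A L t H) (N : Subgroup G) [N.Normal] (hfg : N.FG)
    {a : G} (ha : a ∈ A) (haL : a ∉ L) {n : G} (hnN : n ∈ N) (hn : n ∈ H) :
    (L ⊔ N).FiniteIndex := by
  classical
  obtain ⟨m, hmN, hm, hmH⟩ := h.exists_hyp N ha haL hnN hn
  obtain ⟨X, hX⟩ := hfg
  choose F hF using h.finite_cross
  set E : Finset G := X.biUnion F with hE
  have good : ∀ n ∈ N, ∀ g, (∀ w ∈ E, g * w ∉ L ⊔ N) → (g * n ∈ H ↔ g ∈ H) := by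
    have mv : ∀ g, (∀ w ∈ E, g * w ∉ L ⊔ N) → ∀ n ∈ N, (∀ w ∈ E, g * n * w ∉ L ⊔ N) := by
      intro g hg n hn w hw hmem
      apply hg w hw
      have h1 : w⁻¹ * n⁻¹ * w⁻¹⁻¹ ∈ N := Subgroup.Normal.conj_mem inferInstance _ (N.inv_mem hn) _
      have h2 := (L ⊔ N).mul_mem hmem ((le_sup_right : N ≤ L ⊔ N) h1)
      have h3 : g * n * w * (w⁻¹ * n⁻¹ * w⁻¹⁻¹) = g * w := by group
      rwa [h3] at h2
    intro n hn
    have hn2 := hn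
    rw [← hX] at hn
    induction hn using Subgroup.closure_induction with
    | mem x hx =>
      intro g hg
      apply hF
      intro w hw hl
      exact hg w (Finset.mem_biUnion.2 ⟨x, hx, hw⟩) ((le_sup_left : L ≤ L ⊔ N) hl)
    | one => intro g _; rw [mul_one]
    | mul x y hx hy ihx ihy =>
      rw [hX] at hx hy
      intro g hg
      rw [← mul_assoc, ihy hy _ (mv g hg x hx), ihx hx _ hg]
    | inv x hx ih =>
      rw [hX] at hx
      intro g hg
      have := ih hx _ (mv g hg _ (N.inv_mem hx))
      rw [inv_mul_cancel_right] at this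
      exact this.symm
  have cover : ∀ g, ∃ w ∈ E, g * w ∈ L ⊔ N := by
    intro g
    by_contra hcon
    push Not at hcon
    have hfin := h.finite_bad hm hmH (F g)
    have e : ∀ k : ℤ, k ∉ {k : ℤ | ∃ w ∈ F g, m ^ k * w ∈ L} → (m ^ k ∈ H ↔ g ∈ H) := by
      intro k hk
      have h1 := hF g (m ^ k) (fun w hw hl => hk ⟨w, hw, hl⟩)
      have h2 : g⁻¹ * m ^ k * g⁻¹⁻¹ ∈ N :=
        Subgroup.Normal.conj_mem inferInstance _ (N.zpow_mem hmN k) _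
      have h3 := good _ h2 g hcon
      have h4 : g * (g⁻¹ * m ^ k * g⁻¹⁻¹) = m ^ k * g := by group
      rw [h4] at h3
      rw [← h1, h3]
    obtain ⟨p, hp0, hp⟩ := (Set.Ioi_infinite (0 : ℤ)).exists_notMem_finite hfin
    obtain ⟨q, hq0, hq⟩ := (Set.Iio_infinite (0 : ℤ)).exists_notMem_finite hfin
    have hp1 : m ^ p ∈ H := by
      obtain ⟨r, hr⟩ : ∃ r : ℕ, p = ((r + 1 : ℕ) : ℤ) :=
        ⟨(p - 1).toNat, by have := Set.mem_Ioi.1 hp0; omega⟩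
      rw [hr, zpow_natCast]; exact pow_mem hm hmH r
    have hq1 : m ^ q ∉ H := by
      obtain ⟨r, hr⟩ : ∃ r : ℕ, q = -(r : ℤ) :=
        ⟨(-q).toNat, by have := Set.mem_Iio.1 hq0; omega⟩
      rw [hr, zpow_neg, zpow_natCast]; exact h.inv_pow_notMem hmH r
    exact hq1 ((e q hq).2 ((e p hp).1 hp1))
  have hsurj : Function.Surjective (fun w : E => ((w : G) : G ⧸ (L ⊔ N))) := by
    intro q
    induction q using QuotientGroup.induction_on with
    | H g =>
      obtain ⟨w, hw, hmem⟩ := cover g⁻¹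
      exact ⟨⟨w, hw⟩, (QuotientGroup.eq.2 hmem).symm⟩
  have : Finite (G ⧸ (L ⊔ N)) := Finite.of_surjective _ hsurj
  exact Subgroup.finiteIndex_of_finite_quotient

theorem finiteIndex (h : HalfTree A L t H) (N : Subgroup G) [N.Normal] (hfg : N.FG)
    {a : G} (ha : a ∈ A) (haL : a ∉ L) (hNL : ¬ N ≤ L) :
    (L ⊔ N).FiniteIndex := by
  by_cases hN : ∃ n ∈ N, n ∈ H
  · obtain ⟨n, hnN, hn⟩ := hN
    exact h.finiteIndex_aux N hfg ha haL hnN hn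
  · push Not at hN
    obtain ⟨n, hn, hnL⟩ := SetLike.not_le_iff_exists.1 hNL
    refine h.symm.finiteIndex_aux N hfg ha haL (n := t⁻¹ * n * t⁻¹⁻¹)
      (Subgroup.Normal.conj_mem inferInstance _ hn _) ?_
    have : t * (t⁻¹ * n * t⁻¹⁻¹) = n * t := by group
    rw [Set.mem_ofPred_eq, this, h.mult]
    rintro (h1 | h1)
    · exact hN n hn h1
    · exact hnL h1

/-- Consequence of Britton's lemma. -/
theorem conj_mem_A (h : HalfTree A L t H) {g : G} (hg : t * g * t⁻¹ ∈ A) (hgA : g ∈ A) :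
    t * g * t⁻¹ ∈ L := by
  have h1 : t * g * t⁻¹ * t ∈ H := by
    rw [inv_mul_cancel_right, h.mulA _ _ hgA]; exact h.t_mem
  rcases (h.mult _).1 h1 with h2 | h2
  · exact absurd h2 (h.notMemA hg)
  · exact h2

end HalfTree

section RaagPart

variable {V : Type} (Γ : SimpleGraph V)

/-- The vertex generator. -/
def rgen (v : V) : RAAG Γ := PresentedGroup.of (rels := raagRels Γ) v

theorem rgen_mem {S : Set V} {v : V} (hv : v ∈ S) : rgen Γ v ∈ raagVertexSubgroup Γ S :=
  Subgroup.subset_closure ⟨v, hv, rfl⟩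

theorem rgen_closure : Subgroup.closure (Set.range (rgen Γ)) = ⊤ :=
  PresentedGroup.closure_range_of _

theorem raag_mono {S T : Set V} (h : S ⊆ T) : raagVertexSubgroup Γ S ≤ raagVertexSubgroup Γ T :=
  Subgroup.closure_mono (by rintro x ⟨v, hv, rfl⟩; exact ⟨v, h hv, rfl⟩)

theorem rgen_comm {v w : V} (h : Γ.Adj v w) : rgen Γ v * rgen Γ w = rgen Γ w * rgen Γ v := by
  have : PresentedGroup.mk (raagRels Γ)
      (FreeGroup.of v * FreeGroup.of w * (FreeGroup.of v)⁻¹ * (FreeGroup.of w)⁻¹) = 1 :=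
    PresentedGroup.one_of_mem ⟨v, w, h, rfl⟩
  simp only [map_mul, map_inv] at this
  rw [mul_inv_eq_one, mul_inv_eq_iff_eq_mul] at this
  exact this

/-- Universal property. -/
theorem raag_lift {K : Type} [Group K] (f : V → K)
    (hf : ∀ v w, Γ.Adj v w → f v * f w = f w * f v) :
    ∃ φ : RAAG Γ →* K, ∀ v, φ (rgen Γ v) = f v := by
  have hr : ∀ r ∈ raagRels Γ, FreeGroup.lift f r = 1 := by
    rintro r ⟨v, w, h, rfl⟩
    simp only [map_mul, map_inv, FreeGroup.lift_apply_of]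
    rw [hf v w h]; group
  exact ⟨PresentedGroup.toGroup hr, fun v => PresentedGroup.toGroup.of hr⟩

theorem raag_inf_le (S T : Set V) :
    raagVertexSubgroup Γ S ⊓ raagVertexSubgroup Γ T ≤ raagVertexSubgroup Γ (S ∩ T) := by
  classical
  obtain ⟨φ, hφ⟩ := raag_lift Γ (fun v => if v ∈ S then rgen Γ v else 1) (by
    intro v w h
    split_ifs
    · exact rgen_comm Γ h
    all_goals simp)
  rintro x ⟨hS, hT⟩
  have h1 : φ x = x := by
    have hle : raagVertexSubgroup Γ S ≤ MonoidHom.eqLocus φ (MonoidHom.id _) := by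
      rw [raagVertexSubgroup, Subgroup.closure_le]
      rintro _ ⟨v, hv, rfl⟩
      have := hφ v
      rw [if_pos hv] at this
      exact this
    exact hle hS
  have h2 : raagVertexSubgroup Γ T ≤ (raagVertexSubgroup Γ (S ∩ T)).comap φ := by
    rw [raagVertexSubgroup, Subgroup.closure_le]
    rintro _ ⟨v, hv, rfl⟩
    have := hφ v
    change φ (rgen Γ v) ∈ raagVertexSubgroup Γ (S ∩ T)
    rw [this]
    split_ifs with hvS
    · exact rgen_mem Γ ⟨hvS, hv⟩
    · exact Subgroup.one_mem _
  have := h2 hT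
  rw [Subgroup.mem_comap, h1] at this
  exact this

theorem rgen_notMem {S : Set V} {v : V} (hv : v ∉ S) : rgen Γ v ∉ raagVertexSubgroup Γ S := by
  classical
  obtain ⟨φ, hφ⟩ := raag_lift Γ (K := Multiplicative ℤ)
    (fun w => if w = v then Multiplicative.ofAdd 1 else 1) (fun _ _ _ => mul_comm _ _)
  intro hmem
  have h2 : raagVertexSubgroup Γ S ≤ φ.ker := by
    rw [raagVertexSubgroup, Subgroup.closure_le]
    rintro _ ⟨w, hw, rfl⟩
    change φ (rgen Γ w) = 1
    rw [hφ, if_neg]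
    rintro rfl; exact hv hw
  have h3 : φ (rgen Γ v) = 1 := h2 hmem
  rw [hφ, if_pos rfl] at h3
  exact absurd h3 (by decide)

/-- The permutation of `G × Bool` attached to a vertex `w`; crossing the base edge of `v` flips
the second coordinate. -/
noncomputable def flipPerm {G : Type} [Group G] (s : G) (C : Set G) : Equiv.Perm (G × Bool) := by
  classical
  exact
  { toFun := fun p => (s * p.1, xor p.2 (decide (p.1 ∈ C)))
    invFun := fun p => (s⁻¹ * p.1, xor p.2 (decide (s⁻¹ * p.1 ∈ C)))
    left_inv := by rintro ⟨x, b⟩; simp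
    right_inv := by rintro ⟨x, b⟩; simp }

open Classical in
theorem flipPerm_apply {G : Type} [Group G] (s : G) (C : Set G) (p : G × Bool) :
    flipPerm s C p = (s * p.1, xor p.2 (decide (p.1 ∈ C))) := rfl

theorem exists_halfTree (v : V) : ∃ H : Set (RAAG Γ),
    HalfTree (raagVertexSubgroup Γ {v}ᶜ) (raagVertexSubgroup Γ (Γ.neighborSet v))
      (rgen Γ v)⁻¹ H := by
  classical
  set A := raagVertexSubgroup Γ {v}ᶜ with hA
  set L := raagVertexSubgroup Γ (Γ.neighborSet v) with hL
  have key : ∀ w, Γ.Adj v w → flipPerm (rgen Γ v) (L : Set (RAAG Γ)) * flipPerm (rgen Γ w) ∅ =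
      flipPerm (rgen Γ w) ∅ * flipPerm (rgen Γ v) (L : Set (RAAG Γ)) := by
    intro w h
    have hw : rgen Γ w ∈ L := rgen_mem Γ h
    ext1 p
    simp only [Equiv.Perm.mul_apply, flipPerm_apply]
    rw [← mul_assoc, ← mul_assoc, rgen_comm Γ h]
    have : (rgen Γ w * p.1 ∈ (L : Set (RAAG Γ))) ↔ p.1 ∈ (L : Set (RAAG Γ)) :=
      L.mul_mem_cancel_left hw
    simp [this]
  obtain ⟨φ, hφ⟩ := raag_lift Γ
    (fun w => flipPerm (rgen Γ w) (if w = v then (L : Set (RAAG Γ)) else ∅)) (by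
      intro a b h
      by_cases ha : a = v
      · subst ha
        rw [if_pos rfl, if_neg h.ne']
        exact key b h
      · by_cases hb : b = v
        · subst hb
          rw [if_pos rfl, if_neg ha]
          exact (key a h.symm).symm
        · rw [if_neg ha, if_neg hb]
          ext1 p
          simp only [Equiv.Perm.mul_apply, flipPerm_apply]
          rw [← mul_assoc, ← mul_assoc, rgen_comm Γ h]
          simp)
  have hfst : ∀ g p, (φ g p).1 = g * p.1 := by
    intro g
    have hg : g ∈ Subgroup.closure (Set.range (rgen Γ)) := by rw [rgen_closure]; trivial
    induction hg using Subgroup.closure_induction with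
    | mem x hx =>
      obtain ⟨w, rfl⟩ := hx
      intro p; rw [hφ, flipPerm_apply]
    | one => intro p; simp
    | mul x y _ _ ihx ihy => intro p; rw [map_mul, Equiv.Perm.mul_apply, ihx, ihy, mul_assoc]
    | inv x _ ih =>
      intro p
      have e : φ x (φ x⁻¹ p) = p := by
        rw [← Equiv.Perm.mul_apply, ← map_mul, mul_inv_cancel, map_one]; rfl
      have := ih (φ x⁻¹ p)
      rw [e] at this
      rw [this, inv_mul_cancel_left]
  have hAact : ∀ a ∈ A, ∀ p, (φ a p).2 = p.2 := by
    intro a ha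
    rw [hA, raagVertexSubgroup] at ha
    induction ha using Subgroup.closure_induction with
    | mem x hx =>
      obtain ⟨w, hw, rfl⟩ := hx
      intro p
      change (φ (rgen Γ w) p).2 = p.2
      rw [hφ, flipPerm_apply, if_neg (show ¬ w = v from hw)]; simp
    | one => intro p; simp
    | mul x y _ _ ihx ihy => intro p; rw [map_mul, Equiv.Perm.mul_apply, ihx, ihy]
    | inv x _ ih =>
      intro p
      have e : φ x (φ x⁻¹ p) = p := by
        rw [← Equiv.Perm.mul_apply, ← map_mul, mul_inv_cancel, map_one]; rfl
      have := ih (φ x⁻¹ p)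
      rw [e] at this
      exact this.symm
  have hLA : L ≤ A := raag_mono Γ (by
    intro w hw
    have : Γ.Adj v w := hw
    exact this.ne')
  have hv : ∀ p, (φ (rgen Γ v) p).2 = xor p.2 (decide (p.1 ∈ L)) := by
    intro p
    rw [hφ, flipPerm_apply, if_pos rfl]
    rfl
  have hcomm : ∀ l ∈ L, l * rgen Γ v = rgen Γ v * l := by
    have : L ≤ Subgroup.centralizer {rgen Γ v} := by
      rw [hL, raagVertexSubgroup, Subgroup.closure_le]
      rintro _ ⟨w, hw, rfl⟩
      rw [SetLike.mem_coe, Subgroup.mem_centralizer_singleton_iff]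
      exact (rgen_comm Γ (show Γ.Adj v w from hw)).symm
    intro l hl
    exact Subgroup.mem_centralizer_singleton_iff.1 (this hl)
  refine ⟨{g | (φ g⁻¹ (1, false)).2 = true}, ?_, hLA, ?_, ?_, ?_, ?_⟩
  · rw [eq_top_iff, ← rgen_closure, Subgroup.closure_le]
    rintro _ ⟨w, rfl⟩
    by_cases hw : w = v
    · subst hw
      have : (rgen Γ w)⁻¹ ∈ Subgroup.closure ((A : Set (RAAG Γ)) ∪ {(rgen Γ w)⁻¹}) :=
        Subgroup.subset_closure (Or.inr rfl)
      simpa using Subgroup.inv_mem _ this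
    · exact Subgroup.subset_closure (Or.inl (rgen_mem Γ hw))
  · intro l hl
    rw [inv_mul_eq_iff_eq_mul, ← mul_assoc, ← hcomm l hl, mul_inv_cancel_right]
  · rw [Set.mem_ofPred_eq, inv_one, map_one]; simp
  · intro g a ha
    simp only [Set.mem_ofPred_eq]
    rw [mul_inv_rev, map_mul, Equiv.Perm.mul_apply, hAact _ (A.inv_mem ha)]
  · intro g
    simp only [Set.mem_ofPred_eq]
    rw [mul_inv_rev, inv_inv, map_mul, Equiv.Perm.mul_apply, hv, hfst, mul_one, inv_mem_iff]
    by_cases hg : g ∈ L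
    · rw [hAact _ (hLA (L.inv_mem hg))]; simp [hg]
    · simp [hg]

/-- A normal subgroup lying in `G(S)`, with `S` a proper subset of a join-indecomposable `P`,
is trivial. -/
theorem normal_eq_bot [Finite V] {P : Set V} (hP : ¬ IsJoinOfTwo Γ P) (M : Subgroup (RAAG Γ)) :
    ∀ (n : ℕ) (S : Set V), S.ncard = n → S ⊂ P → M ≤ raagVertexSubgroup Γ S →
      (∀ u ∈ P, ∀ x ∈ M, rgen Γ u * x * (rgen Γ u)⁻¹ ∈ M) → M = ⊥ := by
  intro n
  induction n using Nat.strong_induction_on with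
  | _ n ih =>
    intro S hn hSP hMS hM2
    rcases S.eq_empty_or_nonempty with rfl | hne
    · rw [eq_bot_iff]
      refine hMS.trans ?_
      rw [raagVertexSubgroup, Subgroup.closure_le]
      rintro _ ⟨w, hw, rfl⟩
      exact hw.elim
    · have hex : ∃ s ∈ S, ∃ u ∈ P \ S, ¬ Γ.Adj s u := by
        by_contra hcon
        push Not at hcon
        exact hP ⟨S, P \ S, hne, Set.nonempty_of_ssubset hSP, Set.disjoint_sdiff_right,
          Set.union_sdiff_cancel hSP.1, hcon⟩
      obtain ⟨s, hs, u, ⟨huP, huS⟩, hsu⟩ := hex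
      obtain ⟨H, h⟩ := exists_halfTree Γ u
      have hSA : raagVertexSubgroup Γ S ≤ raagVertexSubgroup Γ {u}ᶜ := raag_mono Γ (by
        rintro w hw rfl; exact huS hw)
      have hML : M ≤ raagVertexSubgroup Γ (Γ.neighborSet u) := by
        intro x hx
        have h1 := hM2 u huP x hx
        have h2 := h.conj_mem_A (g := rgen Γ u * x * (rgen Γ u)⁻¹) (by
          have : (rgen Γ u)⁻¹ * (rgen Γ u * x * (rgen Γ u)⁻¹) * (rgen Γ u)⁻¹⁻¹ = x := by group
          rw [this]; exact hSA (hMS hx)) (hSA (hMS h1))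
        have : (rgen Γ u)⁻¹ * (rgen Γ u * x * (rgen Γ u)⁻¹) * (rgen Γ u)⁻¹⁻¹ = x := by group
        rwa [this] at h2
      have hlt : S ∩ Γ.neighborSet u ⊂ S := by
        refine ⟨Set.inter_subset_left, fun hsub => hsu ?_⟩
        have : Γ.Adj u s := (hsub hs).2
        exact this.symm
      refine ih _ ?_ (S ∩ Γ.neighborSet u) rfl (hlt.trans_subset hSP.1)
        ((le_inf hMS hML).trans (raag_inf_le Γ _ _)) hM2
      rw [← hn]
      exact Set.ncard_lt_ncard hlt (Set.toFinite _)

theorem exists_decomp [Finite V] : ∃ (k : ℕ) (P : Fin k → Set V), IsJoinDecomposition Γ P := by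
  classical
  obtain ⟨k, ⟨e⟩⟩ := Finite.exists_equiv_fin Γᶜ.ConnectedComponent
  refine ⟨k, fun i => {x | e (Γᶜ.connectedComponentMk x) = i}, ?_, ?_, ?_, ?_⟩
  · intro i
    obtain ⟨x, hx⟩ := (e.symm i).exists_rep
    refine ⟨x, ?_⟩
    change e (Γᶜ.connectedComponentMk x) = i
    rw [show Γᶜ.connectedComponentMk x = e.symm i from hx, e.apply_symm_apply]
  · intro v
    exact ⟨_, rfl, fun j hj => hj.symm⟩
  · intro i j hij a ha b hb
    by_contra hadj
    have hne : a ≠ b := by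
      rintro rfl
      exact hij (ha.symm.trans hb)
    have : Γᶜ.Adj a b := (SimpleGraph.compl_adj _ _ _).2 ⟨hne, hadj⟩
    have h2 := SimpleGraph.ConnectedComponent.sound this.reachable
    apply hij
    rw [← ha, ← hb]
    exact congrArg e h2
  · rintro i ⟨A, B, ⟨a, ha⟩, ⟨b, hb⟩, hdis, hun, hadj⟩
    have ha' : e (Γᶜ.connectedComponentMk a) = i := by
      have : a ∈ A ∪ B := Or.inl ha
      rw [hun] at this; exact this
    have hb' : e (Γᶜ.connectedComponentMk b) = i := by
      have : b ∈ A ∪ B := Or.inr hb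
      rw [hun] at this; exact this
    have hr : Γᶜ.Reachable a b :=
      SimpleGraph.ConnectedComponent.exact (e.injective (ha'.trans hb'.symm))
    obtain ⟨p⟩ := hr
    have hclosed : ∀ {x y : V} (p : Γᶜ.Walk x y), x ∈ A → y ∈ A := by
      intro x y p
      induction p with
      | nil => exact id
      | @cons x y z hxy q ih =>
        intro hx
        apply ih
        have hx' : e (Γᶜ.connectedComponentMk x) = i := by
          have : x ∈ A ∪ B := Or.inl hx
          rw [hun] at this; exact this
        have hy : y ∈ A ∪ B := by
          rw [hun]
          change e (Γᶜ.connectedComponentMk y) = i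
          rw [← hx']
          exact congrArg e (SimpleGraph.ConnectedComponent.sound hxy.reachable).symm
        rcases hy with hy | hy
        · exact hy
        · exact absurd (hadj x hx y hy) ((SimpleGraph.compl_adj _ _ _).1 hxy).2
    exact Set.disjoint_left.1 hdis (hclosed p ha) hb

/-- The centralizer of the image of each vertex has finite index in the quotient. -/
theorem centralizer_finiteIndex [Finite V] (N : Subgroup (RAAG Γ)) [hNn : N.Normal]
    (hfg : N.FG) (hfull : IsFullSubgroup Γ N) (v : V) :
    (Subgroup.centralizer {(rgen Γ v : RAAG Γ ⧸ N)}).FiniteIndex := by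
  set L := raagVertexSubgroup Γ (Γ.neighborSet v) with hL
  have hmain : ∀ K : Subgroup (RAAG Γ), K.FiniteIndex →
      (∀ x ∈ K, (x : RAAG Γ ⧸ N) * (rgen Γ v : RAAG Γ ⧸ N) = (rgen Γ v : RAAG Γ ⧸ N) * x) →
      (Subgroup.centralizer {(rgen Γ v : RAAG Γ ⧸ N)}).FiniteIndex := by
    intro K hK hKc
    have hle : K ≤ (Subgroup.centralizer {(rgen Γ v : RAAG Γ ⧸ N)}).comap
        (QuotientGroup.mk' N) := by
      intro x hx
      rw [Subgroup.mem_comap, Subgroup.mem_centralizer_singleton_iff]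
      exact hKc x hx
    have := Subgroup.finiteIndex_of_le hle
    constructor
    rw [← Subgroup.index_comap_of_surjective _ (QuotientGroup.mk'_surjective N)]
    exact this.index_ne_zero
  have hLc : ∀ x ∈ L, x * rgen Γ v = rgen Γ v * x := by
    have : L ≤ Subgroup.centralizer {rgen Γ v} := by
      rw [hL, raagVertexSubgroup, Subgroup.closure_le]
      rintro _ ⟨w, hw, rfl⟩
      rw [SetLike.mem_coe, Subgroup.mem_centralizer_singleton_iff]
      exact (rgen_comm Γ (show Γ.Adj v w from hw)).symm
    intro l hl
    exact Subgroup.mem_centralizer_singleton_iff.1 (this hl)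
  by_cases hcen : ∀ a, a ≠ v → Γ.Adj v a
  · refine hmain ⊤ inferInstance fun x _ => ?_
    have : (⊤ : Subgroup (RAAG Γ)) ≤ Subgroup.centralizer {rgen Γ v} := by
      rw [← rgen_closure, Subgroup.closure_le]
      rintro _ ⟨w, rfl⟩
      rw [SetLike.mem_coe, Subgroup.mem_centralizer_singleton_iff]
      by_cases hw : w = v
      · rw [hw]
      · exact (rgen_comm Γ (hcen w hw)).symm
    have h1 := Subgroup.mem_centralizer_singleton_iff.1 (this (Subgroup.mem_top x))
    rw [← QuotientGroup.mk_mul, ← QuotientGroup.mk_mul, h1]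
  · push Not at hcen
    obtain ⟨a, hav, hadj⟩ := hcen
    obtain ⟨k, P, hP⟩ := exists_decomp Γ
    obtain ⟨i, hvi, -⟩ := hP.2.1 v
    obtain ⟨H, h⟩ := exists_halfTree Γ v
    have hNL : ¬ N ≤ L := by
      intro hle
      apply hfull k P hP i
      set M := N ⊓ raagVertexSubgroup Γ (P i) with hM
      have hPN : ∀ u ∈ P i, ∀ x ∈ M, rgen Γ u * x * (rgen Γ u)⁻¹ ∈ M := by
        intro u hu x hx
        have hu' := rgen_mem Γ hu
        exact ⟨hNn.conj_mem x hx.1 _, Subgroup.mul_mem _ (Subgroup.mul_mem _ hu' hx.2)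
          (Subgroup.inv_mem _ hu')⟩
      refine normal_eq_bot Γ (hP.2.2.2 i) M _ (P i ∩ Γ.neighborSet v) rfl ?_ ?_ hPN
      · refine ⟨Set.inter_subset_left, fun hsub => ?_⟩
        exact Γ.loopless.irrefl v (hsub hvi).2
      · exact (le_inf inf_le_right (inf_le_left.trans hle)).trans (raag_inf_le Γ _ _)
    have hfi := h.finiteIndex N hfg (a := rgen Γ a) (rgen_mem Γ hav)
      (rgen_notMem Γ (fun hmem => hadj hmem)) hNL
    refine hmain _ hfi fun x hx => ?_
    obtain ⟨l, hl, n, hn, rfl⟩ := Subgroup.mem_sup_of_normal_right.1 hx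
    have hn1 : ((n : RAAG Γ) : RAAG Γ ⧸ N) = 1 := (QuotientGroup.eq_one_iff n).2 hn
    rw [QuotientGroup.mk_mul, hn1, mul_one, ← QuotientGroup.mk_mul, ← QuotientGroup.mk_mul,
      hLc l hl]

end RaagPart

theorem center_of_quotient_of_RAAG_by_fg_full_normal_subgroup_has_finite_index
    {V : Type} [Fintype V] (Γ : SimpleGraph V)
    (N : Subgroup (RAAG Γ)) [N.Normal]
    (hfg : N.FG) (hfull : IsFullSubgroup Γ N) :
    (Subgroup.center (RAAG Γ ⧸ N)).FiniteIndex := by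
  have hle : (⨅ v : V, Subgroup.centralizer {(rgen Γ v : RAAG Γ ⧸ N)}) ≤
      Subgroup.center (RAAG Γ ⧸ N) := by
    intro x hx
    rw [Subgroup.mem_iInf] at hx
    rw [Subgroup.mem_center_iff]
    intro g
    induction g using QuotientGroup.induction_on with
    | H g =>
      have h1 : (⊤ : Subgroup (RAAG Γ)) ≤
          (Subgroup.centralizer {x}).comap (QuotientGroup.mk' N) := by
        rw [← rgen_closure, Subgroup.closure_le]
        rintro _ ⟨w, rfl⟩
        rw [SetLike.mem_coe, Subgroup.mem_comap, Subgroup.mem_centralizer_singleton_iff]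
        exact (Subgroup.mem_centralizer_singleton_iff.1 (hx w)).symm
      have h2 := h1 (Subgroup.mem_top g)
      rw [Subgroup.mem_comap, Subgroup.mem_centralizer_singleton_iff] at h2
      exact h2
  have hfi : (⨅ v : V, Subgroup.centralizer {(rgen Γ v : RAAG Γ ⧸ N)}).FiniteIndex :=
    Subgroup.finiteIndex_iInf (centralizer_finiteIndex Γ N hfg hfull)
  exact Subgroup.finiteIndex_of_le hle
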